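/- Let m, d ∈ ℕ with m, d ≥ 2, N = m^d, and let P be a jittered sampling point set of N points in [0,1)^d. Then E[D*(P)] ≥ (4/(5·e^(8+1/6)·√(2π))) · exp( −32 / (m−1)^((d−1)/2) ) · d · (m−1)^((d−1)/2). -/

import Mathlib

open MeasureTheory ProbabilityTheory Real

noncomputable section

/-- The axis-aligned cube `∏_i [x_i/m, x_i/m + 1/m)` of the `m`-grid partition of `[0,1)^d`. -/
def jitterCube (m d : ℕ) (x : Fin d → Fin m) : Set (Fin d → ℝ) :=
  Set.univ.pi fun i => Set.Ico ((x i : ℝ) / m) ((x i : ℝ) / m + 1 / m)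

/-- The distribution of a jittered sampling point configuration: independently, one point
uniformly distributed in each of the `m^d` cubes. -/
def jitterMeasure (m d : ℕ) : Measure ((Fin d → Fin m) → (Fin d → ℝ)) :=
  Measure.pi fun x => ((m : ENNReal) ^ d) • volume.restrict (jitterCube m d x)

open scoped Classical in
/-- Signed (non-normalized) discrepancy `|P ∩ A| - N·λ(A)` with `N = m^d` of a point
configuration `P`. -/
def jdisc (m d : ℕ) (P : (Fin d → Fin m) → (Fin d → ℝ)) (A : Set (Fin d → ℝ)) : ℝ :=
  ((Finset.univ.filter fun x => P x ∈ A).card : ℝ) - (m : ℝ) ^ d * (volume A).toReal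

/-- The anchored box `[0,y) = ∏_i [0, y_i)`. -/
def anchoredBox (d : ℕ) (y : Fin d → ℝ) : Set (Fin d → ℝ) :=
  Set.univ.pi fun i => Set.Ico 0 (y i)

/-- The (non-normalized) star discrepancy `D*(P) = sup_{y ∈ [0,1)^d} |disc([0,y))|`. -/
def starDisc (m d : ℕ) (P : (Fin d → Fin m) → (Fin d → ℝ)) : ℝ :=
  ⨆ y : {y : Fin d → ℝ // ∀ i, y i ∈ Set.Ico (0 : ℝ) 1}, |jdisc m d P (anchoredBox d y.1)|

/-- The expected star discrepancy of a jittered sampling point set of `m^d` points. -/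
def expStarDisc (m d : ℕ) : ℝ :=
  ∫ P, starDisc m d P ∂(jitterMeasure m d)

/-!
Condition on the points in the `d` slabs of cubes that touch the upper boundary of the unit cube in
exactly one direction. For `s ⊆ {1, …, d}`, the anchored box whose upper corner has coordinate
`1 - 1/(2m)` in the directions `i ∈ s` and `1 - 1/m` in the others contains exactly the lower halves
of the cubes of the slabs `i ∈ s` and misses the other slabs, while the points outside the slabs
average out. Its conditional expected discrepancy is thus `∑ i ∈ s, Eᵢ`, where `Eᵢ` is the excess of
points in the lower halves of slab `i`. Choosing `s = {i | 0 < Eᵢ}` after the slab points are known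
gives `E[D*] ≥ ∑ᵢ E[max Eᵢ 0] = ∑ᵢ E|Eᵢ| / 2`.

Each `Eᵢ` is a sum of `n = (m-1)^(d-1)` independent signs `±1/2`, so `E|Eᵢ|` is of order `√n`. For
the lower bound, test `∑ₖ Xₖ` against the Riesz product `R = ∏ₖ (1 + i t Xₖ)`: by independence only
the diagonal terms survive in `E[R ∑ₖ Xₖ] = i t ∑ₖ E[Xₖ²]`, and for `t` of order `1/√n` the product
`R` is bounded.
-/

section Moments

variable {ι Ω : Type*} [Fintype ι] {mΩ : MeasurableSpace Ω} {μ : Measure Ω}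

lemma norm_one_add_mul_I_le_exp (y : ℝ) : ‖1 + y * Complex.I‖ ≤ exp (y ^ 2 / 2) := by
  have h := Complex.norm_add_mul_I 1 y
  rw [Complex.ofReal_one] at h
  rw [h, exp_half, one_pow, add_comm]
  exact sqrt_le_sqrt (add_one_le_exp _)

lemma integral_mul_prod_one_add_mul_I {X : ι → Ω → ℝ} (hX : iIndepFun X μ)
    (hXm : ∀ i, Measurable (X i)) (hL2 : ∀ i, MemLp (X i) 2 μ) (hX0 : ∀ i, μ[X i] = 0)
    (t : ℝ) (j : ι) :
    ∫ ω, X j ω * ∏ i, (1 + ↑(t * X i ω) * Complex.I) ∂μ = ↑(t * ∫ ω, X j ω ^ 2 ∂μ) * Complex.I := by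
  classical
  have := hX.isProbabilityMeasure
  have hint : ∀ i, Integrable (fun ω => (X i ω : ℂ)) μ := fun i =>
    ((hL2 i).integrable one_le_two).ofReal
  have hsq : Integrable (fun ω => ((X j ω ^ 2 : ℝ) : ℂ)) μ := (hL2 j).integrable_sq.ofReal
  let g (i : ι) (y : ℝ) : ℂ := (if i = j then (y : ℂ) else 1) * (1 + ↑(t * y) * Complex.I)
  have hg : ∀ i, Measurable (g i) := fun i => by
    by_cases h : i = j <;> simp only [g, h, if_true, if_false] <;> fun_prop
  have hj : ∫ ω, g j (X j ω) ∂μ = ↑(t * ∫ ω, X j ω ^ 2 ∂μ) * Complex.I := by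
    have : ∀ ω, g j (X j ω) = X j ω + ((X j ω ^ 2 : ℝ) : ℂ) * (t * Complex.I) := fun ω => by
      simp only [g, if_true]; push_cast; ring
    simp only [this]
    rw [integral_add (hint j) (hsq.mul_const _), integral_mul_const, integral_complex_ofReal,
      integral_complex_ofReal, hX0 j]
    push_cast; ring
  have hne : ∀ i ≠ j, ∫ ω, g i (X i ω) ∂μ = 1 := fun i hi => by
    have : ∀ ω, g i (X i ω) = 1 + (X i ω : ℂ) * (t * Complex.I) := fun ω => by
      simp only [g, if_neg hi]; push_cast; ring
    simp only [this]
    rw [integral_add (integrable_const _) ((hint i).mul_const _), integral_mul_const,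
      integral_complex_ofReal, hX0 i]
    simp
  calc ∫ ω, X j ω * ∏ i, (1 + ↑(t * X i ω) * Complex.I) ∂μ = ∫ ω, ∏ i, g i (X i ω) ∂μ := by
        simp only [g, Finset.prod_mul_distrib, Finset.prod_ite_eq', Finset.mem_univ, if_true]
    _ = ∏ i, ∫ ω, g i (X i ω) ∂μ :=
        hX.integral_fun_prod_comp (fun i => (hXm i).aemeasurable)
          fun i => (hg i).aestronglyMeasurable
    _ = ∫ ω, g j (X j ω) ∂μ := Fintype.prod_eq_single j hne
    _ = _ := hj

lemma norm_prod_one_add_mul_I_le (x : ι → ℝ) {b : ℝ} (hx : ∀ i, |x i| ≤ b) (t : ℝ) :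
    ‖∏ i, (1 + ↑(t * x i) * Complex.I)‖ ≤ exp (Fintype.card ι * (t * b) ^ 2 / 2) := by
  calc ‖∏ i, (1 + ↑(t * x i) * Complex.I)‖
      = ∏ i, ‖1 + ↑(t * x i) * Complex.I‖ := norm_prod _ _
    _ ≤ ∏ _i : ι, exp ((t * b) ^ 2 / 2) := by
        refine Finset.prod_le_prod (fun _ _ => norm_nonneg _) fun i _ =>
          (norm_one_add_mul_I_le_exp _).trans ?_
        rw [mul_pow, mul_pow]
        gcongr exp (_ * ?_ / 2)
        exact sq_le_sq' (neg_le_of_abs_le (hx i)) (le_of_abs_le (hx i))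
    _ = exp (Fintype.card ι * (t * b) ^ 2 / 2) := by
        rw [Finset.prod_const, Finset.card_univ, ← exp_nat_mul, mul_div_assoc]

lemma mul_sum_integral_sq_le_integral_abs_sum {X : ι → Ω → ℝ} (hX : iIndepFun X μ)
    (hXm : ∀ i, Measurable (X i)) {b : ℝ} (hXb : ∀ i ω, |X i ω| ≤ b) (hX0 : ∀ i, μ[X i] = 0)
    (t : ℝ) :
    t * ∑ i, ∫ ω, X i ω ^ 2 ∂μ ≤
      exp (Fintype.card ι * (t * b) ^ 2 / 2) * ∫ ω, |∑ i, X i ω| ∂μ := by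
  have := hX.isProbabilityMeasure
  set R : Ω → ℂ := fun ω => ∏ i, (1 + ↑(t * X i ω) * Complex.I)
  have hRm : Measurable R := by fun_prop
  have hRb : ∀ ω, ‖R ω‖ ≤ exp (Fintype.card ι * (t * b) ^ 2 / 2) := fun ω =>
    norm_prod_one_add_mul_I_le _ (fun i => hXb i ω) t
  have hL2 : ∀ i, MemLp (X i) 2 μ := fun i =>
    MemLp.of_bound (hXm i).aestronglyMeasurable b (ae_of_all _ (hXb i))
  have hint : ∀ i, Integrable (X i) μ := fun i => (hL2 i).integrable one_le_two
  have hXR : ∀ i, Integrable (fun ω => (X i ω : ℂ) * R ω) μ := fun i =>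
    (hint i).ofReal.mul_bdd hRm.aestronglyMeasurable (ae_of_all _ hRb)
  have hexp : ∫ ω, ((∑ i, X i ω : ℝ) : ℂ) * R ω ∂μ
      = ↑(t * ∑ i, ∫ ω, X i ω ^ 2 ∂μ) * Complex.I := by
    simp only [Complex.ofReal_sum, Finset.sum_mul, Finset.mul_sum]
    rw [integral_finsetSum _ fun i _ => hXR i]
    exact Finset.sum_congr rfl fun j _ => integral_mul_prod_one_add_mul_I hX hXm hL2 hX0 t j
  calc t * ∑ i, ∫ ω, X i ω ^ 2 ∂μ ≤ ‖∫ ω, ((∑ i, X i ω : ℝ) : ℂ) * R ω ∂μ‖ := by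
        rw [hexp, norm_mul, Complex.norm_I, mul_one, Complex.norm_real]
        exact le_norm_self _
    _ ≤ ∫ ω, exp (Fintype.card ι * (t * b) ^ 2 / 2) * |∑ i, X i ω| ∂μ := by
        refine norm_integral_le_of_norm_le
          ((integrable_finsetSum _ fun i _ => hint i).abs.const_mul _) (ae_of_all _ fun ω => ?_)
        rw [norm_mul, Complex.norm_real, norm_eq_abs, mul_comm]
        gcongr
        exact hRb ω
    _ = _ := integral_const_mul _ _

theorem sum_integral_sq_le_mul_integral_abs_sum {X : ι → Ω → ℝ} (hX : iIndepFun X μ)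
    (hXm : ∀ i, Measurable (X i)) {b : ℝ} (hb : 0 < b) (hXb : ∀ i ω, |X i ω| ≤ b)
    (hX0 : ∀ i, μ[X i] = 0) :
    ∑ i, ∫ ω, X i ω ^ 2 ∂μ ≤
      b * √(Fintype.card ι) * exp (1 / 2) * ∫ ω, |∑ i, X i ω| ∂μ := by
  cases isEmpty_or_nonempty ι
  · simp
  have hn : (0 : ℝ) < Fintype.card ι := by exact_mod_cast Fintype.card_pos
  have h := mul_sum_integral_sq_le_integral_abs_sum hX hXm hXb hX0 (b * √(Fintype.card ι))⁻¹
  have ht : Fintype.card ι * ((b * √(Fintype.card ι))⁻¹ * b) ^ 2 = (1 : ℝ) := by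
    rw [mul_inv_rev, inv_mul_cancel_right₀ hb.ne', inv_pow, sq_sqrt hn.le, mul_inv_cancel₀ hn.ne']
  rwa [ht, inv_mul_le_iff₀ (by positivity), ← mul_assoc] at h

end Moments

theorem condExp_sum_comp_of_iIndepFun {ι Ω E : Type*} [Fintype ι] [MeasurableSpace E]
    {mΩ : MeasurableSpace Ω} {μ : Measure Ω} {X : ι → Ω → E} (hX : iIndepFun X μ)
    (hXm : ∀ i, Measurable (X i)) {f : ι → E → ℝ} (hf : ∀ i, Measurable (f i))
    (hint : ∀ i, Integrable (fun ω => f i (X i ω)) μ) (hf0 : ∀ i, ∫ ω, f i (X i ω) ∂μ = 0)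
    (T : Finset ι) :
    μ[fun ω => ∑ i, f i (X i ω) | ⨆ i ∈ T, MeasurableSpace.comap (X i) inferInstance] =ᵐ[μ]
      fun ω => ∑ i ∈ T, f i (X i ω) := by
  classical
  have := hX.isProbabilityMeasure
  set 𝓖 : MeasurableSpace Ω := ⨆ i ∈ T, MeasurableSpace.comap (X i) inferInstance
  have hle : 𝓖 ≤ mΩ := iSup₂_le fun i _ => (hXm i).comap_le
  have hfX : ∀ i, StronglyMeasurable[MeasurableSpace.comap (X i) inferInstance]
      fun ω => f i (X i ω) := fun i =>
    ((hf i).comp (comap_measurable (X i))).stronglyMeasurable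
  have hmem : ∀ i ∈ T, μ[fun ω => f i (X i ω) | 𝓖] = fun ω => f i (X i ω) := fun i hi =>
    condExp_of_stronglyMeasurable hle ((hfX i).mono (le_iSup₂_of_le i hi le_rfl)) (hint i)
  have hnotMem : ∀ i ∉ T, μ[fun ω => f i (X i ω) | 𝓖] =ᵐ[μ] 0 := fun i hi => by
    have hindep : Indep (MeasurableSpace.comap (X i) inferInstance) 𝓖 μ := by
      simpa using indep_iSup_of_disjoint (fun i => (hXm i).comap_le) hX.iIndep
        (S := {i}) (T := T) (by simpa using hi)
    filter_upwards [condExp_indep_eq (hXm i).comap_le hle (hfX i) hindep] with ω hω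
    rw [hω, hf0 i, Pi.zero_apply]
  have hsum := condExp_finsetSum (fun i (_ : i ∈ Finset.univ) => hint i) 𝓖
  have hrest : ∀ᵐ ω ∂μ, ∀ i, i ∉ T → (μ[fun ω => f i (X i ω) | 𝓖]) ω = 0 := by
    simp_rw [ae_all_iff]
    exact hnotMem
  filter_upwards [hsum, hrest] with ω hω hrest
  rw [Finset.sum_fn] at hω
  rw [hω, Finset.sum_apply, ← Finset.sum_subset T.subset_univ fun i _ => hrest i]
  exact Finset.sum_congr rfl fun i hi => congrFun (hmem i hi) ω

lemma integral_max_zero_of_integral_eq_zero {Ω : Type*} [MeasurableSpace Ω] {μ : Measure Ω}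
    {f : Ω → ℝ} (hf : Integrable f μ) (hf0 : ∫ ω, f ω ∂μ = 0) :
    ∫ ω, max (f ω) 0 ∂μ = (∫ ω, |f ω| ∂μ) / 2 := by
  have hmax (ω : Ω) : max (f ω) 0 = (|f ω| + f ω) / 2 := by
    rcases abs_cases (f ω) with ⟨h, h'⟩ | ⟨h, h'⟩
    · rw [max_eq_left h', h]; ring
    · rw [max_eq_right h'.le, h]; ring
  simp only [hmax]
  rw [integral_div, integral_add hf.abs hf, hf0, add_zero]

lemma exists_seq_rat_tendsto_nhdsWithin_Iic {ι : Type*} {y : ι → ℝ} (hy : ∀ i, 0 ≤ y i) :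
    ∃ q : ℕ → ι → ℚ, (∀ n i, (0 : ℝ) ≤ q n i) ∧ (∀ n i, (q n i : ℝ) ≤ y i) ∧
      Filter.Tendsto (fun n i => (q n i : ℝ)) Filter.atTop (nhdsWithin y (Set.Iic y)) := by
  let q (n : ℕ) (i : ι) : ℚ := ⌊y i * n⌋₊ / n
  have hle (n : ℕ) (i : ι) : (q n i : ℝ) ≤ y i := by
    push_cast [q]
    exact div_le_of_le_mul₀ n.cast_nonneg (hy i)
      (Nat.floor_le (mul_nonneg (hy i) n.cast_nonneg))
  refine ⟨q, fun n i => by positivity, hle, tendsto_nhdsWithin_iff.2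
    ⟨tendsto_pi_nhds.2 fun i => ?_, .of_forall fun n => hle n⟩⟩
  push_cast [q]
  exact (tendsto_nat_floor_mul_div_atTop (hy i)).comp tendsto_natCast_atTop_atTop

theorem cond_pi {ι : Type*} [Fintype ι] {α : ι → Type*} [∀ i, MeasurableSpace (α i)]
    (μ : ∀ i, Measure (α i)) [∀ i, SigmaFinite (μ i)] {s : ∀ i, Set (α i)}
    (hs : ∀ i, MeasurableSet (s i)) (h0 : ∀ i, μ i (s i) ≠ 0) (htop : ∀ i, μ i (s i) ≠ ⊤) :
    (Measure.pi μ)[|Set.univ.pi s] = Measure.pi fun i => (μ i)[|s i] := by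
  have : ∀ i, IsProbabilityMeasure ((μ i)[|s i]) := fun i =>
    cond_isProbabilityMeasure_of_finite (h0 i) (htop i)
  refine (Measure.pi_eq fun t _ => ?_).symm
  rw [cond_apply (.univ_pi hs), ← Set.pi_inter_distrib, Measure.pi_pi, Measure.pi_pi,
    ENNReal.prod_inv_distrib fun i _ _ _ _ => .inl (h0 i), ← Finset.prod_mul_distrib]
  exact Finset.prod_congr rfl fun i _ => (cond_apply (hs i) _ _).symm

theorem cond_Ico_real_Iio_midpoint {a b : ℝ} (hab : a < b) :
    (volume[|Set.Ico a b]).real (Set.Iio ((a + b) / 2)) = 1 / 2 := by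
  have hint : Set.Ico a b ∩ Set.Iio ((a + b) / 2) = Set.Ico a ((a + b) / 2) := by
    rw [Set.Ico_inter_Iio, min_eq_right (by linarith)]
  rw [measureReal_def, cond_apply measurableSet_Ico, hint, volume_Ico, volume_Ico,
    ENNReal.toReal_mul, ENNReal.toReal_inv, ENNReal.toReal_ofReal (by linarith),
    ENNReal.toReal_ofReal (by linarith)]
  have : b - a ≠ 0 := by linarith
  field_simp
  ring

section CenteredIndicator

variable {α : Type*} [MeasurableSpace α] {ν : Measure α} {A : Set α}

/-- The indicator function of `A`, centred to have mean zero under the probability measure `ν`. -/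
def centeredIndicator (ν : Measure α) (A : Set α) (p : α) : ℝ :=
  A.indicator 1 p - ν.real A

lemma measurable_centeredIndicator (hA : MeasurableSet A) :
    Measurable (centeredIndicator ν A) :=
  (measurable_one.indicator hA).sub_const _

lemma abs_centeredIndicator_le_one [IsProbabilityMeasure ν] (p : α) :
    |centeredIndicator ν A p| ≤ 1 := by
  have h0 : 0 ≤ ν.real A := measureReal_nonneg
  have h1 : ν.real A ≤ 1 := measureReal_le_one
  rw [centeredIndicator, abs_le]
  by_cases hp : p ∈ A <;> simp only [hp, Set.indicator_of_mem, Set.indicator_of_notMem,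
    not_false_eq_true, Pi.one_apply] <;> constructor <;> linarith

lemma abs_centeredIndicator_of_measureReal_eq_half (hA : ν.real A = 1 / 2) (p : α) :
    |centeredIndicator ν A p| = 1 / 2 := by
  rw [centeredIndicator, hA]
  by_cases hp : p ∈ A
  · rw [Set.indicator_of_mem hp, Pi.one_apply, abs_of_pos] <;> norm_num
  · rw [Set.indicator_of_notMem hp, abs_of_neg] <;> norm_num

lemma integral_centeredIndicator [IsProbabilityMeasure ν] (hA : MeasurableSet A) :
    ∫ p, centeredIndicator ν A p ∂ν = 0 := by
  simp only [centeredIndicator]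
  rw [integral_sub ((integrable_const 1).indicator hA) (integrable_const _),
    integral_indicator_one hA]
  simp

lemma centeredIndicator_empty : centeredIndicator ν ∅ = 0 := by
  funext p
  simp [centeredIndicator]

lemma centeredIndicator_congr_ae {B : Set α} (h : A =ᵐ[ν] B) :
    centeredIndicator ν A =ᵐ[ν] centeredIndicator ν B := by
  filter_upwards [indicator_ae_eq_of_ae_eq_set (f := (1 : α → ℝ)) h] with p hp
  rw [centeredIndicator, hp, measureReal_congr h, centeredIndicator]

end CenteredIndicator

section Cubes

variable {m d : ℕ}

lemma measurableSet_jitterCube (x : Fin d → Fin m) : MeasurableSet (jitterCube m d x) :=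
  .univ_pi fun _ => measurableSet_Ico

lemma volume_jitterCube [NeZero m] (x : Fin d → Fin m) :
    volume (jitterCube m d x) = ((m : ENNReal) ^ d)⁻¹ := by
  have hm : (0 : ℝ) < m := by exact_mod_cast Nat.pos_of_neZero m
  simp [jitterCube, volume_pi_Ico, ENNReal.ofReal_inv_of_pos hm, ENNReal.inv_pow]

lemma cond_jitterCube [NeZero m] (x : Fin d → Fin m) :
    volume[|jitterCube m d x] = (m : ENNReal) ^ d • volume.restrict (jitterCube m d x) := by
  rw [ProbabilityTheory.cond, volume_jitterCube, inv_inv]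

instance [NeZero m] (x : Fin d → Fin m) : IsProbabilityMeasure volume[|jitterCube m d x] :=
  cond_isProbabilityMeasure_of_finite (by simp [volume_jitterCube]) (by
    simp [volume_jitterCube, NeZero.ne])

lemma jitterMeasure_eq_pi_cond [NeZero m] :
    jitterMeasure m d = Measure.pi fun x => volume[|jitterCube m d x] := by
  simp only [cond_jitterCube, jitterMeasure]

instance [NeZero m] : IsProbabilityMeasure (jitterMeasure m d) := by
  rw [jitterMeasure_eq_pi_cond]
  infer_instance

lemma measurePreserving_eval_jitterMeasure [NeZero m] (x : Fin d → Fin m) :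
    MeasurePreserving (Function.eval x) (jitterMeasure m d) volume[|jitterCube m d x] := by
  rw [jitterMeasure_eq_pi_cond]
  exact measurePreserving_eval (fun x : Fin d → Fin m => volume[|jitterCube m d x]) x

lemma iIndepFun_eval_jitterMeasure [NeZero m] :
    iIndepFun (fun x (P : (Fin d → Fin m) → Fin d → ℝ) => P x) (jitterMeasure m d) := by
  rw [jitterMeasure_eq_pi_cond]
  exact iIndepFun_pi (X := fun _ => id) fun _ => aemeasurable_id

lemma natFloor_mul_eq_iff [NeZero m] {y : ℝ} (hy : 0 ≤ y) (k : ℕ) :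
    ⌊m * y⌋₊ = k ↔ y ∈ Set.Ico ((k : ℝ) / m) (k / m + 1 / m) := by
  have hm : (0 : ℝ) < m := by exact_mod_cast Nat.pos_of_neZero m
  rw [Nat.floor_eq_iff (by positivity), Set.mem_Ico, ← add_div, div_le_iff₀' hm, lt_div_iff₀' hm]

lemma iUnion_jitterCube [NeZero m] :
    ⋃ x, jitterCube m d x = Set.univ.pi fun _ => Set.Ico (0 : ℝ) 1 := by
  have hm : (0 : ℝ) < m := by exact_mod_cast Nat.pos_of_neZero m
  simp only [jitterCube]
  rw [Set.iUnion_univ_pi fun (_ : Fin d) (k : Fin m) => Set.Ico ((k : ℝ) / m) (k / m + 1 / m)]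
  congr! with _
  ext y
  rw [Set.mem_iUnion]
  constructor
  · rintro ⟨k, hk, hk'⟩
    have : (k : ℝ) / m + 1 / m ≤ 1 := by
      rw [← add_div, div_le_one hm]
      exact_mod_cast k.2
    exact ⟨le_trans (by positivity) hk, hk'.trans_le this⟩
  · rintro ⟨hy0, hy1⟩
    have hk : ⌊m * y⌋₊ < m := (Nat.floor_lt (by positivity)).2 (mul_lt_of_lt_one_right hm hy1)
    exact ⟨⟨_, hk⟩, (natFloor_mul_eq_iff hy0 _).1 rfl⟩

lemma pairwise_disjoint_jitterCube [NeZero m] :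
    Pairwise (Function.onFun Disjoint (jitterCube m d)) := by
  refine fun x x' hne => Set.disjoint_left.2 fun p hp hp' => hne (funext fun i => Fin.ext ?_)
  have h0 : 0 ≤ p i := le_trans (by positivity) (hp i trivial).1
  exact ((natFloor_mul_eq_iff h0 _).2 (hp i trivial)).symm.trans
    ((natFloor_mul_eq_iff h0 _).2 (hp' i trivial))

lemma sum_cond_jitterCube [NeZero m] :
    ∑ x, volume[|jitterCube m d x] =
      (m : ENNReal) ^ d • volume.restrict (Set.univ.pi fun _ => Set.Ico (0 : ℝ) 1) := by
  rw [← iUnion_jitterCube (m := m), Measure.restrict_iUnion pairwise_disjoint_jitterCube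
    measurableSet_jitterCube]
  simp only [cond_jitterCube, Measure.sum_fintype, Finset.smul_sum]

lemma sum_measureReal_cond_jitterCube [NeZero m] {A : Set (Fin d → ℝ)}
    (hA : A ⊆ Set.univ.pi fun _ => Set.Ico 0 1) :
    ∑ x, (volume[|jitterCube m d x]).real A = m ^ d * (volume A).toReal := by
  have h := congrArg (· A) (sum_cond_jitterCube (m := m) (d := d))
  simp only [Measure.coe_finsetSum, Finset.sum_apply, Measure.smul_apply, smul_eq_mul,
    Measure.restrict_eq_self _ hA] at h
  simp only [measureReal_def]
  rw [← ENNReal.toReal_sum fun x _ => measure_ne_top _ _, h]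
  simp

end Cubes

section StarDiscrepancy

variable {m d : ℕ}

lemma measurableSet_anchoredBox (y : Fin d → ℝ) : MeasurableSet (anchoredBox d y) :=
  .univ_pi fun _ => measurableSet_Ico

lemma anchoredBox_mono : Monotone (anchoredBox d) := fun _ _ h =>
  Set.pi_mono fun i _ => Set.Ico_subset_Ico_right (h i)

lemma anchoredBox_subset_unitCube {y : Fin d → ℝ} (hy : ∀ i, y i ∈ Set.Ico (0 : ℝ) 1) :
    anchoredBox d y ⊆ Set.univ.pi fun _ => Set.Ico 0 1 :=
  anchoredBox_mono fun i => (hy i).2.le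

lemma toReal_volume_anchoredBox (y : Fin d → ℝ) :
    (volume (anchoredBox d y)).toReal = ∏ i, max (y i) 0 := by
  simp [anchoredBox, volume_pi_Ico, ENNReal.toReal_prod, ENNReal.toReal_ofReal']

lemma jdisc_eq_sum_indicator_sub (P : (Fin d → Fin m) → Fin d → ℝ) (A : Set (Fin d → ℝ)) :
    jdisc m d P A = ∑ x, A.indicator (1 : (Fin d → ℝ) → ℝ) (P x) - m ^ d * (volume A).toReal := by
  classical
  simp [jdisc, Set.indicator_apply]

lemma jdisc_eq_sum_centeredIndicator [NeZero m] (P : (Fin d → Fin m) → Fin d → ℝ)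
    {A : Set (Fin d → ℝ)} (hA : A ⊆ Set.univ.pi fun _ => Set.Ico 0 1) :
    jdisc m d P A = ∑ x, centeredIndicator volume[|jitterCube m d x] A (P x) := by
  simp only [centeredIndicator]
  rw [jdisc_eq_sum_indicator_sub, Finset.sum_sub_distrib, sum_measureReal_cond_jitterCube hA]

lemma measurable_jdisc {A : Set (Fin d → ℝ)} (hA : MeasurableSet A) :
    Measurable fun P => jdisc m d P A := by
  simp only [jdisc_eq_sum_indicator_sub]
  exact (Finset.measurable_fun_sum _ fun x _ =>
    (measurable_one.indicator hA).comp (measurable_pi_apply x)).sub_const _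

lemma abs_jdisc_le [NeZero m] (P : (Fin d → Fin m) → Fin d → ℝ)
    {A : Set (Fin d → ℝ)} (hA : A ⊆ Set.univ.pi fun _ => Set.Ico 0 1) :
    |jdisc m d P A| ≤ m ^ d := by
  rw [jdisc_eq_sum_centeredIndicator P hA]
  calc |∑ x, centeredIndicator volume[|jitterCube m d x] A (P x)|
      ≤ ∑ x, |centeredIndicator volume[|jitterCube m d x] A (P x)| :=
        Finset.abs_sum_le_sum_abs _ _
    _ ≤ ∑ _x : Fin d → Fin m, 1 := Finset.sum_le_sum fun x _ => abs_centeredIndicator_le_one _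
    _ = m ^ d := by simp

lemma bddAbove_range_abs_jdisc_anchoredBox [NeZero m] (P : (Fin d → Fin m) → Fin d → ℝ) :
    BddAbove (Set.range fun y : {y : Fin d → ℝ // ∀ i, y i ∈ Set.Ico (0 : ℝ) 1} =>
      |jdisc m d P (anchoredBox d y.1)|) :=
  ⟨m ^ d, Set.forall_mem_range.2 fun y => abs_jdisc_le P (anchoredBox_subset_unitCube y.2)⟩

lemma abs_jdisc_anchoredBox_le_starDisc [NeZero m] (P : (Fin d → Fin m) → Fin d → ℝ)
    {y : Fin d → ℝ} (hy : ∀ i, y i ∈ Set.Ico (0 : ℝ) 1) :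
    |jdisc m d P (anchoredBox d y)| ≤ starDisc m d P :=
  le_ciSup (bddAbove_range_abs_jdisc_anchoredBox P) ⟨y, hy⟩

lemma starDisc_nonneg (P : (Fin d → Fin m) → Fin d → ℝ) : 0 ≤ starDisc m d P :=
  Real.iSup_nonneg fun _ => abs_nonneg _

lemma starDisc_le [NeZero m] (P : (Fin d → Fin m) → Fin d → ℝ) : starDisc m d P ≤ m ^ d :=
  Real.iSup_le (fun y => abs_jdisc_le P (anchoredBox_subset_unitCube y.2)) (by positivity)

lemma continuousWithinAt_jdisc_anchoredBox (P : (Fin d → Fin m) → Fin d → ℝ) (y : Fin d → ℝ) :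
    ContinuousWithinAt (fun z => jdisc m d P (anchoredBox d z)) (Set.Iic y) y := by
  simp only [jdisc_eq_sum_indicator_sub, toReal_volume_anchoredBox]
  have hvol : Continuous fun z : Fin d → ℝ => (m : ℝ) ^ d * ∏ i, max (z i) 0 :=
    (continuous_finsetProd _ fun i _ => (continuous_apply i).max continuous_const).const_mul _
  refine .sub (tendsto_finsetSum _ fun x _ => ?_) hvol.continuousWithinAt
  refine tendsto_nhds_of_eventually_eq ?_
  by_cases hx : P x ∈ anchoredBox d y
  · have hev : ∀ᶠ z in nhdsWithin y (Set.Iic y), ∀ i, P x i < z i :=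
      Filter.eventually_all.2 fun i =>
        ((continuous_apply i).continuousWithinAt.eventually_const_lt (hx i trivial).2)
    filter_upwards [hev] with z hz
    have hxz : P x ∈ anchoredBox d z := fun i _ => ⟨(hx i trivial).1, hz i⟩
    rw [Set.indicator_of_mem hx, Set.indicator_of_mem hxz]
  · filter_upwards [self_mem_nhdsWithin] with z hz
    rw [Set.indicator_of_notMem hx, Set.indicator_of_notMem fun h => hx (anchoredBox_mono hz h)]

lemma starDisc_eq_iSup_rat [NeZero m] (P : (Fin d → Fin m) → Fin d → ℝ) :
    starDisc m d P = ⨆ q : {q : Fin d → ℚ // ∀ i, (q i : ℝ) ∈ Set.Ico (0 : ℝ) 1},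
      |jdisc m d P (anchoredBox d fun i => q.1 i)| := by
  have : Nonempty {y : Fin d → ℝ // ∀ i, y i ∈ Set.Ico (0 : ℝ) 1} := ⟨0, by simp⟩
  have : Nonempty {q : Fin d → ℚ // ∀ i, (q i : ℝ) ∈ Set.Ico (0 : ℝ) 1} := ⟨0, by simp⟩
  refine le_antisymm (ciSup_le fun ⟨y, hy⟩ => ?_)
    (ciSup_le fun q => abs_jdisc_anchoredBox_le_starDisc P q.2)
  obtain ⟨q, hq0, hqy, hq⟩ := exists_seq_rat_tendsto_nhdsWithin_Iic fun i => (hy i).1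
  refine le_of_tendsto' ((continuousWithinAt_jdisc_anchoredBox P y).abs.tendsto.comp hq) fun n => ?_
  refine le_ciSup (f := fun q : {q : Fin d → ℚ // ∀ i, (q i : ℝ) ∈ Set.Ico (0 : ℝ) 1} =>
    |jdisc m d P (anchoredBox d fun i => q.1 i)|) ⟨m ^ d, ?_⟩
    ⟨q n, fun i => ⟨hq0 n i, (hqy n i).trans_lt (hy i).2⟩⟩
  exact Set.forall_mem_range.2 fun q => abs_jdisc_le P (anchoredBox_subset_unitCube q.2)

lemma measurable_starDisc [NeZero m] : Measurable (starDisc m d) := by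
  simp only [funext starDisc_eq_iSup_rat]
  exact .iSup fun q => (measurable_jdisc (measurableSet_anchoredBox _)).norm

lemma integrable_starDisc [NeZero m] : Integrable (starDisc m d) (jitterMeasure m d) := by
  refine .of_bound measurable_starDisc.aestronglyMeasurable (m ^ d) (ae_of_all _ fun P => ?_)
  rw [norm_of_nonneg (starDisc_nonneg P)]
  exact starDisc_le P

end StarDiscrepancy

section Slabs

variable {m d : ℕ}

/-- The grid indices of the cubes that touch the upper boundary of the unit cube in direction `i`
and in no other direction. -/
def slab (m d : ℕ) (i : Fin d) : Finset (Fin d → Fin m) :=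
  Fintype.piFinset fun j => {k | (k : ℕ) + 1 = m ↔ j = i}

/-- The half-space that cuts every cube of `slab m d i` into halves of equal volume and contains
the lower one. -/
def lowerHalf (m : ℕ) (i : Fin d) : Set (Fin d → ℝ) :=
  Function.eval i ⁻¹' Set.Iio (1 - 1 / (2 * m))

/-- The upper corner of the anchored box that contains the lower halves of the cubes of
`slab m d i` for `i ∈ s` and misses the cubes of `slab m d i` for `i ∉ s`. -/
def corner (m : ℕ) (s : Finset (Fin d)) (i : Fin d) : ℝ :=
  if i ∈ s then 1 - 1 / (2 * m) else 1 - 1 / m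

/-- The σ-algebra generated by the points of the configuration that are placed in the cubes of the
slabs. -/
abbrev slabSigmaAlgebra (m d : ℕ) : MeasurableSpace ((Fin d → Fin m) → Fin d → ℝ) :=
  ⨆ x ∈ Finset.univ.biUnion (slab m d), MeasurableSpace.comap (Function.eval x) inferInstance

/-- The number of points of `P` in the lower halves of the cubes of `slab m d i`, minus its
expectation. -/
def slabExcess (m d : ℕ) (i : Fin d) (P : (Fin d → Fin m) → Fin d → ℝ) : ℝ :=
  ∑ x ∈ slab m d i, centeredIndicator volume[|jitterCube m d x] (lowerHalf m i) (P x)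

lemma mem_slab {i : Fin d} {x : Fin d → Fin m} :
    x ∈ slab m d i ↔ ∀ j, (x j : ℕ) + 1 = m ↔ j = i := by
  simp [slab]

lemma card_slab [NeZero m] (i : Fin d) : (slab m d i).card = (m - 1) ^ (d - 1) := by
  obtain ⟨n, rfl⟩ := Nat.exists_eq_succ_of_ne_zero (NeZero.ne m)
  have hcard (j : Fin d) : ({k | (k : ℕ) + 1 = n + 1 ↔ j = i} : Finset (Fin (n + 1))).card =
      if j = i then 1 else n := by
    have hlast (k : Fin (n + 1)) : (k : ℕ) + 1 = n + 1 ↔ k = Fin.last n := by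
      rw [add_left_inj, Fin.ext_iff, Fin.val_last]
    split_ifs with h <;> simp only [hlast, h, iff_true, iff_false] <;>
      simp [Finset.filter_eq', Finset.filter_ne']
  rw [slab, Fintype.card_piFinset, Finset.prod_congr rfl fun j _ => hcard j, Finset.prod_ite]
  simp [Finset.filter_ne']

lemma sqrt_card_slab [NeZero m] (i : Fin d) :
    √(slab m d i).card = ((m : ℝ) - 1) ^ (((d : ℝ) - 1) / 2) := by
  have hm : 1 ≤ m := NeZero.one_le
  have hd : 1 ≤ d := i.pos
  have hm0 : (0 : ℝ) ≤ m - 1 := sub_nonneg.2 (by exact_mod_cast hm)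
  rw [card_slab, Nat.cast_pow, Nat.cast_pred hm, sqrt_eq_rpow, ← rpow_natCast_mul hm0,
    Nat.cast_pred hd, mul_one_div]

lemma pairwiseDisjoint_slab (s : Set (Fin d)) : s.PairwiseDisjoint (slab m d) := by
  refine fun i _ j _ hij => Finset.disjoint_left.2 fun x hi hj => hij ?_
  exact (mem_slab.1 hj i).1 ((mem_slab.1 hi i).2 rfl)

lemma measurableSet_lowerHalf (i : Fin d) : MeasurableSet (lowerHalf m i) :=
  measurable_pi_apply i measurableSet_Iio

lemma one_sub_inv_le_corner (s : Finset (Fin d)) (i : Fin d) : 1 - 1 / (m : ℝ) ≤ corner m s i := by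
  have : 1 / (2 * m : ℝ) ≤ 1 / m := by
    rw [one_div, one_div, mul_inv]
    exact mul_le_of_le_one_left (by positivity) (by norm_num)
  rw [corner]
  split_ifs <;> linarith

lemma corner_mem_Ico [NeZero m] (s : Finset (Fin d)) (i : Fin d) :
    corner m s i ∈ Set.Ico (0 : ℝ) 1 := by
  have hm : (1 : ℝ) ≤ m := by exact_mod_cast Nat.pos_of_neZero m
  constructor
  · exact (sub_nonneg.2 (div_le_one_of_le₀ hm (by positivity))).trans (one_sub_inv_le_corner s i)
  · rw [corner]
    split_ifs <;> exact sub_lt_self _ (by positivity)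

lemma measureReal_cond_lowerHalf [NeZero m] {i : Fin d} {x : Fin d → Fin m}
    (hx : x ∈ slab m d i) : (volume[|jitterCube m d x]).real (lowerHalf m i) = 1 / 2 := by
  have hm : (0 : ℝ) < m := by exact_mod_cast Nat.pos_of_neZero m
  have hxi : (x i : ℝ) + 1 = m := by exact_mod_cast (mem_slab.1 hx i).2 rfl
  have hlt (j : Fin d) : (x j : ℝ) / m < x j / m + 1 / m := lt_add_of_pos_right _ (by positivity)
  have (j : Fin d) :
      IsProbabilityMeasure volume[|Set.Ico ((x j : ℝ) / m) (x j / m + 1 / m)] :=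
    cond_isProbabilityMeasure_of_finite (by simp [NeZero.ne m]) (by simp)
  have hmid : ((x i : ℝ) / m + (x i / m + 1 / m)) / 2 = 1 - 1 / (2 * m) := by
    rw [← hxi] at hm ⊢
    field_simp
    ring
  rw [← cond_Ico_real_Iio_midpoint (hlt i), hmid, lowerHalf, jitterCube, volume_pi,
    cond_pi _ (fun _ => measurableSet_Ico) (by simp [hm]) (by simp)]
  exact (measurePreserving_eval _ i).measureReal_preimage measurableSet_Iio.nullMeasurableSet

lemma mem_anchoredBox_corner_iff [NeZero m] {i : Fin d} {x : Fin d → Fin m} (hx : x ∈ slab m d i)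
    {p : Fin d → ℝ} (hp : p ∈ jitterCube m d x) (s : Finset (Fin d)) :
    p ∈ anchoredBox d (corner m s) ↔ i ∈ s ∧ p ∈ lowerHalf m i := by
  have hm : (0 : ℝ) < m := by exact_mod_cast Nat.pos_of_neZero m
  have hp0 (j : Fin d) : 0 ≤ p j := le_trans (by positivity) (hp j trivial).1
  have hpi : 1 - 1 / m ≤ p i := by
    have hxi : (x i : ℝ) + 1 = m := by exact_mod_cast (mem_slab.1 hx i).2 rfl
    refine le_of_eq_of_le ?_ (hp i trivial).1
    rw [eq_sub_of_add_eq hxi, sub_div, div_self hm.ne']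
  have hpj (j : Fin d) (hj : j ≠ i) : p j < 1 - 1 / m := by
    have hxj : (x j : ℝ) + 1 ≤ m - 1 := by
      have : (x j : ℕ) + 1 + 1 ≤ m := lt_of_le_of_ne (x j).2 (mt (mem_slab.1 hx j).1 hj)
      rw [le_sub_iff_add_le]
      exact_mod_cast this
    calc p j < x j / m + 1 / m := (hp j trivial).2
      _ ≤ (m - 1) / m := by rw [← add_div]; gcongr
      _ = 1 - 1 / m := by rw [sub_div, div_self hm.ne']
  have hbox : p ∈ anchoredBox d (corner m s) ↔ p i < corner m s i := by
    refine ⟨fun h => (h i trivial).2, fun h j _ => ⟨hp0 j, ?_⟩⟩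
    rcases eq_or_ne j i with rfl | hj
    · exact h
    · exact (hpj j hj).trans_le (one_sub_inv_le_corner s j)
  rw [hbox, corner]
  split_ifs with hi
  · exact (and_iff_right hi).symm
  · exact iff_of_false hpi.not_gt fun h => hi h.1

lemma centeredIndicator_anchoredBox_corner_ae_eq [NeZero m] {i : Fin d} {x : Fin d → Fin m}
    (hx : x ∈ slab m d i) (s : Finset (Fin d)) :
    centeredIndicator volume[|jitterCube m d x] (anchoredBox d (corner m s))
      =ᵐ[volume[|jitterCube m d x]]
        if i ∈ s then centeredIndicator volume[|jitterCube m d x] (lowerHalf m i) else 0 := by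
  have hbox : anchoredBox d (corner m s) =ᵐ[volume[|jitterCube m d x]]
      (if i ∈ s then lowerHalf m i else ∅ : Set (Fin d → ℝ)) := by
    filter_upwards [ae_cond_mem (measurableSet_jitterCube x)] with p hp
    refine propext ((mem_anchoredBox_corner_iff hx hp s).trans ?_)
    split_ifs with hi
    · exact and_iff_right hi
    · exact iff_of_false (fun h => hi h.1) id
  refine (centeredIndicator_congr_ae hbox).trans (.of_eq ?_)
  split_ifs
  · rfl
  · exact centeredIndicator_empty

lemma integrable_centeredIndicator_eval [NeZero m] (x : Fin d → Fin m) {A : Set (Fin d → ℝ)}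
    (hA : MeasurableSet A) :
    Integrable (fun P => centeredIndicator volume[|jitterCube m d x] A (P x))
      (jitterMeasure m d) :=
  .of_bound ((measurable_centeredIndicator hA).comp (measurable_pi_apply x)).aestronglyMeasurable 1
    (ae_of_all _ fun _ => abs_centeredIndicator_le_one _)

lemma integral_centeredIndicator_eval [NeZero m] (x : Fin d → Fin m) {A : Set (Fin d → ℝ)}
    (hA : MeasurableSet A) :
    ∫ P, centeredIndicator volume[|jitterCube m d x] A (P x) ∂jitterMeasure m d = 0 := by
  have hx := measurePreserving_eval_jitterMeasure (m := m) x
  have hmap := integral_map hx.aemeasurable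
    (measurable_centeredIndicator (ν := volume[|jitterCube m d x]) hA).aestronglyMeasurable
  rw [hx.map_eq, integral_centeredIndicator hA] at hmap
  exact hmap.symm

lemma condExp_jdisc [NeZero m] {A : Set (Fin d → ℝ)} (hA : MeasurableSet A)
    (hA1 : A ⊆ Set.univ.pi fun _ => Set.Ico 0 1) (T : Finset (Fin d → Fin m)) :
    (jitterMeasure m d)[fun P => jdisc m d P A |
        ⨆ x ∈ T, MeasurableSpace.comap (Function.eval x) inferInstance] =ᵐ[jitterMeasure m d]
      fun P => ∑ x ∈ T, centeredIndicator volume[|jitterCube m d x] A (P x) := by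
  simp only [jdisc_eq_sum_centeredIndicator _ hA1]
  exact condExp_sum_comp_of_iIndepFun iIndepFun_eval_jitterMeasure measurable_pi_apply
    (fun _ => measurable_centeredIndicator hA) (fun x => integrable_centeredIndicator_eval x hA)
    (fun x => integral_centeredIndicator_eval x hA) T

lemma condExp_jdisc_anchoredBox_corner [NeZero m] (s : Finset (Fin d)) :
    (jitterMeasure m d)[fun P => jdisc m d P (anchoredBox d (corner m s)) | slabSigmaAlgebra m d]
      =ᵐ[jitterMeasure m d] fun P => ∑ i ∈ s, slabExcess m d i P := by
  have hslab : ∀ᵐ P ∂jitterMeasure m d, ∀ i, ∀ x ∈ slab m d i,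
      centeredIndicator volume[|jitterCube m d x] (anchoredBox d (corner m s)) (P x) =
        if i ∈ s then centeredIndicator volume[|jitterCube m d x] (lowerHalf m i) (P x)
        else 0 := by
    simp only [ae_all_iff]
    intro i x hx
    filter_upwards [(measurePreserving_eval_jitterMeasure x).quasiMeasurePreserving.ae
      (centeredIndicator_anchoredBox_corner_ae_eq hx s)] with P hP
    exact hP.trans (by split_ifs <;> rfl)
  have hbox := anchoredBox_subset_unitCube (corner_mem_Ico (m := m) s)
  filter_upwards [hslab, condExp_jdisc (measurableSet_anchoredBox _) hbox
    (Finset.univ.biUnion (slab m d))] with P hP hcond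
  calc _ = ∑ i, ∑ x ∈ slab m d i,
          centeredIndicator volume[|jitterCube m d x] (anchoredBox d (corner m s)) (P x) :=
        hcond.trans (Finset.sum_biUnion (pairwiseDisjoint_slab _))
    _ = ∑ i, if i ∈ s then slabExcess m d i P else 0 := Finset.sum_congr rfl fun i _ => by
        rw [Finset.sum_congr rfl (hP i), slabExcess]
        split_ifs <;> simp
    _ = ∑ i ∈ s, slabExcess m d i P := by simp

lemma integrable_slabExcess [NeZero m] (i : Fin d) :
    Integrable (slabExcess m d i) (jitterMeasure m d) :=
  integrable_finsetSum _ fun x _ =>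
    integrable_centeredIndicator_eval x (measurableSet_lowerHalf i)

lemma integral_slabExcess [NeZero m] (i : Fin d) :
    ∫ P, slabExcess m d i P ∂jitterMeasure m d = 0 := by
  simp only [slabExcess]
  rw [integral_finsetSum _ fun x _ =>
    integrable_centeredIndicator_eval x (measurableSet_lowerHalf i)]
  exact Finset.sum_eq_zero fun x _ =>
    integral_centeredIndicator_eval x (measurableSet_lowerHalf i)

lemma sum_slabExcess_le_condExp_starDisc [NeZero m] (s : Finset (Fin d)) :
    (fun P => ∑ i ∈ s, slabExcess m d i P) ≤ᵐ[jitterMeasure m d]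
      (jitterMeasure m d)[starDisc m d | slabSigmaAlgebra m d] := by
  have habs (P) : |jdisc m d P (anchoredBox d (corner m s))| ≤ starDisc m d P :=
    abs_jdisc_anchoredBox_le_starDisc P (corner_mem_Ico s)
  have hint : Integrable (fun P => jdisc m d P (anchoredBox d (corner m s))) (jitterMeasure m d) :=
    integrable_starDisc.mono' (measurable_jdisc (measurableSet_anchoredBox _)).aestronglyMeasurable
      (ae_of_all _ habs)
  exact (condExp_jdisc_anchoredBox_corner s).symm.le.trans
    (condExp_mono hint integrable_starDisc (ae_of_all _ fun P => le_of_abs_le (habs P)))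

lemma sum_max_slabExcess_le_condExp_starDisc [NeZero m] :
    (fun P => ∑ i, max (slabExcess m d i P) 0) ≤ᵐ[jitterMeasure m d]
      (jitterMeasure m d)[starDisc m d | slabSigmaAlgebra m d] := by
  filter_upwards [ae_all_iff.2 sum_slabExcess_le_condExp_starDisc] with P hP
  convert hP {i | 0 < slabExcess m d i P} using 1
  rw [Finset.sum_filter]
  refine Finset.sum_congr rfl fun i _ => ?_
  split_ifs with h
  · exact max_eq_left h.le
  · exact max_eq_right (not_lt.1 h)

lemma sum_integral_max_slabExcess_le_expStarDisc [NeZero m] :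
    ∑ i, ∫ P, max (slabExcess m d i P) 0 ∂jitterMeasure m d ≤ expStarDisc m d := by
  have hpos (i : Fin d) : Integrable (fun P => max (slabExcess m d i P) 0) (jitterMeasure m d) :=
    (integrable_slabExcess i).pos_part
  have hle : slabSigmaAlgebra m d ≤ MeasurableSpace.pi :=
    iSup₂_le fun x _ => (measurable_pi_apply x).comap_le
  calc ∑ i, ∫ P, max (slabExcess m d i P) 0 ∂jitterMeasure m d
      = ∫ P, ∑ i, max (slabExcess m d i P) 0 ∂jitterMeasure m d :=
        (integral_finsetSum _ fun i _ => hpos i).symm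
    _ ≤ ∫ P, (jitterMeasure m d)[starDisc m d | slabSigmaAlgebra m d] P ∂jitterMeasure m d :=
        integral_mono_ae (integrable_finsetSum _ fun i _ => hpos i) integrable_condExp
          sum_max_slabExcess_le_condExp_starDisc
    _ = expStarDisc m d := integral_condExp hle

lemma sqrt_card_slab_le_integral_abs_slabExcess [NeZero m] (i : Fin d) :
    √(slab m d i).card / (2 * exp (1 / 2)) ≤ ∫ P, |slabExcess m d i P| ∂jitterMeasure m d := by
  let X (x : slab m d i) (P : (Fin d → Fin m) → Fin d → ℝ) : ℝ :=
    centeredIndicator volume[|jitterCube m d x] (lowerHalf m i) (P x)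
  have hXm (x : slab m d i) : Measurable (X x) :=
    (measurable_centeredIndicator (measurableSet_lowerHalf i)).comp (measurable_pi_apply _)
  have hindep : iIndepFun X (jitterMeasure m d) :=
    (iIndepFun_eval_jitterMeasure.precomp Subtype.val_injective).comp
      (fun x : slab m d i => centeredIndicator volume[|jitterCube m d x] (lowerHalf m i))
      fun _ => measurable_centeredIndicator (measurableSet_lowerHalf i)
  have habs (x : slab m d i) (P) : |X x P| = 1 / 2 :=
    abs_centeredIndicator_of_measureReal_eq_half (measureReal_cond_lowerHalf x.2) _
  have hsq (x : slab m d i) : ∫ P, X x P ^ 2 ∂jitterMeasure m d = 1 / 4 := by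
    have : ∀ P, X x P ^ 2 = 1 / 4 := fun P => by rw [← sq_abs, habs]; norm_num
    simp [this]
  have hsum (P) : ∑ x, X x P = slabExcess m d i P :=
    Finset.sum_coe_sort (slab m d i) fun x =>
      centeredIndicator volume[|jitterCube m d x] (lowerHalf m i) (P x)
  have h := sum_integral_sq_le_mul_integral_abs_sum hindep hXm one_half_pos
    (fun x P => (habs x P).le)
    fun x => integral_centeredIndicator_eval x.1 (measurableSet_lowerHalf i)
  simp only [hsq, hsum, Finset.sum_const, Finset.card_univ, Fintype.card_coe, nsmul_eq_mul] at h
  calc √(slab m d i).card / (2 * exp (1 / 2))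
      = (slab m d i).card * (1 / 4) / (1 / 2 * √(slab m d i).card * exp (1 / 2)) := by
        nth_rw 1 [← div_sqrt]
        ring
    _ ≤ ∫ P, |slabExcess m d i P| ∂jitterMeasure m d :=
        div_le_of_le_mul₀ (by positivity) (integral_nonneg fun _ => abs_nonneg _) (by linarith)

end Slabs

lemma four_div_mul_exp_le_one_div_four_mul_exp_half {t : ℝ} (ht : 0 ≤ t) :
    4 / (5 * exp (8 + 1 / 6) * √(2 * π)) * exp (-32 / t) ≤ 1 / (4 * exp (1 / 2)) := by
  have hexp : exp (-32 / t) ≤ 1 :=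
    exp_le_one_iff.2 (div_nonpos_of_nonpos_of_nonneg (by norm_num) ht)
  have hE : 4 * exp (1 / 2) ≤ exp (8 + 1 / 6) := by
    rw [show (8 + 1 / 6 : ℝ) = 23 / 3 + 1 / 2 by norm_num, exp_add]
    gcongr
    linarith [add_one_le_exp (23 / 3 : ℝ)]
  have hS : 1 ≤ √(2 * π) := one_le_sqrt.2 (by linarith [pi_gt_three])
  calc 4 / (5 * exp (8 + 1 / 6) * √(2 * π)) * exp (-32 / t)
      ≤ 4 / (5 * (4 * exp (1 / 2)) * 1) * 1 := by gcongr
    _ ≤ 1 / (4 * exp (1 / 2)) := by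
        rw [mul_one, mul_one, div_le_div_iff₀ (by positivity) (by positivity)]
        linarith [exp_pos (1 / 2)]

theorem jittered_sampling_lower_bound_small_m_general (m d : ℕ) (hm : 1 ≤ m) :
    1 / (4 * exp (1 / 2)) * d * ((m : ℝ) - 1) ^ (((d : ℝ) - 1) / 2) ≤ expStarDisc m d := by
  have : NeZero m := ⟨by omega⟩
  calc 1 / (4 * exp (1 / 2)) * d * ((m : ℝ) - 1) ^ (((d : ℝ) - 1) / 2)
      = ∑ i, √(slab m d i).card / (2 * exp (1 / 2)) / 2 := by
        simp only [sqrt_card_slab, Finset.sum_const, Finset.card_univ, Fintype.card_fin,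
          nsmul_eq_mul]
        ring
    _ ≤ ∑ i, (∫ P, |slabExcess m d i P| ∂jitterMeasure m d) / 2 :=
        Finset.sum_le_sum fun i _ => by
          gcongr
          exact sqrt_card_slab_le_integral_abs_slabExcess i
    _ = ∑ i, ∫ P, max (slabExcess m d i P) 0 ∂jitterMeasure m d :=
        Finset.sum_congr rfl fun i _ => (integral_max_zero_of_integral_eq_zero
          (integrable_slabExcess i) (integral_slabExcess i)).symm
    _ ≤ expStarDisc m d := sum_integral_max_slabExcess_le_expStarDisc

/-- For `m, d ≥ 2` and `N = m^d`, a jittered sampling point set `P` of `N` points in `[0,1)^d`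
satisfies `E[D*(P)] ≥ (4/(5·e^(8+1/6)·√(2π)))·exp(−32/(m−1)^((d−1)/2))·d·(m−1)^((d−1)/2)`. -/
theorem jittered_sampling_lower_bound_small_m (m d : ℕ) (hm : 2 ≤ m) (hd : 2 ≤ d) :
    4 / (5 * Real.exp (8 + 1 / 6) * Real.sqrt (2 * Real.pi)) *
        Real.exp (-32 / ((m : ℝ) - 1) ^ (((d : ℝ) - 1) / 2)) *
        d * ((m : ℝ) - 1) ^ (((d : ℝ) - 1) / 2)
      ≤ expStarDisc m d := by
  have hM : 0 ≤ ((m : ℝ) - 1) ^ (((d : ℝ) - 1) / 2) :=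
    rpow_nonneg (sub_nonneg.2 (by exact_mod_cast one_le_two.trans hm)) _
  refine le_trans ?_ (jittered_sampling_lower_bound_small_m_general m d (one_le_two.trans hm))
  gcongr ?_ * d * _
  exact four_div_mul_exp_le_one_div_four_mul_exp_half hM
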